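/- Let the real-valued random field Z = {Z(s) : s ∈ Z^N} have identically distributed marginals and exponentially decreasing α-mixing coefficients (α(k) ≤ c0·exp(−c1·k)), with E[Z(s)] = 0 and |Z(s)| ≤ B for all s. Let n ∈ N_+^N satisfy min_i n_i ≥ e² and min_i n_i / max_i n_i ≥ C' for some constant C' > 0. Then there are constants A1, A2 > 0 depending only on the lattice dimension N, on C' and on c0, c1 (but not on n or B) such that for all ε > 0: P( |Σ_{s∈I_n} Z(s)| > ε ) ≤ A1·exp( −A2·ε·B^{−1}·(∏_{i=1}^N n_i)^{−N/(N+1)}·(∏_{i=1}^N log n_i)^{−1} ). -/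

import Mathlib

open MeasureTheory Filter

noncomputable section

/-- `ℓ∞`-distance between two lattice points of `ℤ^N`. -/
def latDist {N : ℕ} (s t : Fin N → ℤ) : ℕ := Finset.univ.sup fun i => (s i - t i).natAbs

/-- The σ-algebra generated by the random variables `Z(s)`, `s ∈ I`. -/
def fieldSigma {N : ℕ} {Ω E : Type*} [MeasurableSpace E]
    (Z : (Fin N → ℤ) → Ω → E) (I : Set (Fin N → ℤ)) : MeasurableSpace Ω :=
  ⨆ s ∈ I, MeasurableSpace.comap (Z s) inferInstance

/-- The spatial α-mixing coefficient. -/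
def alphaMix {N : ℕ} {Ω E : Type*} [MeasurableSpace Ω] [MeasurableSpace E]
    (P : Measure Ω) (Z : (Fin N → ℤ) → Ω → E) (k : ℕ) : ℝ :=
  sSup { x : ℝ | ∃ I J : Set (Fin N → ℤ),
    (∀ s ∈ I, ∀ t ∈ J, k ≤ latDist s t) ∧
    ∃ A B : Set Ω, MeasurableSet[fieldSigma Z I] A ∧ MeasurableSet[fieldSigma Z J] B ∧
      x = |(P (A ∩ B)).toReal - (P A).toReal * (P B).toReal| }

/-- The observation window `I_n = {s ∈ ℤ^N : e_N ≤ s ≤ n}`. -/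
def obsIdx {N : ℕ} (n : Fin N → ℕ) : Finset (Fin N → ℤ) :=
  Finset.Icc (fun _ => 1) (fun i => (n i : ℤ))

section Covariance

variable {Ω : Type*} {mΩ : MeasurableSpace Ω} {P : Measure Ω} [IsProbabilityMeasure P]

/-- If the integrals of `g` over all `m`-measurable sets are at most `κ`, then `∫ X g ≤ a κ` for
every `m`-measurable `X` with values in `[0, a]`. -/
lemma integral_mul_le_of_setIntegral_le {m : MeasurableSpace Ω} (hm : m ≤ mΩ) {X g : Ω → ℝ}
    {a κ : ℝ} (hX : Measurable[m] X) (hX0 : ∀ᵐ ω ∂P, 0 ≤ X ω) (hXa : ∀ᵐ ω ∂P, X ω ≤ a)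
    (ha : 0 ≤ a) (hg : Integrable g P)
    (hκ : ∀ A, MeasurableSet[m] A → ∫ ω in A, g ω ∂P ≤ κ) :
    ∫ ω, X ω * g ω ∂P ≤ a * κ := by
  have hXb : ∀ᵐ ω ∂P, ‖X ω‖ ≤ a := by
    filter_upwards [hX0, hXa] with ω h0 h1
    rwa [Real.norm_eq_abs, abs_of_nonneg h0]
  have hXm : Measurable[mΩ] X := hX.mono hm le_rfl
  have hpull : P[X * g | m] =ᵐ[P] X * P[g | m] :=
    condExp_mul_of_stronglyMeasurable_left hX.stronglyMeasurable
      (hg.bdd_mul hXm.aestronglyMeasurable hXb) hg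
  set h := P[g | m] with hh
  have hhm : Measurable[m] h := stronglyMeasurable_condExp.measurable
  set A : Set Ω := {ω | 0 ≤ h ω}
  have hA : MeasurableSet[m] A := measurableSet_le measurable_const hhm
  calc ∫ ω, X ω * g ω ∂P = ∫ ω, P[X * g | m] ω ∂P := (integral_condExp hm).symm
    _ = ∫ ω, X ω * h ω ∂P := integral_congr_ae hpull
    _ ≤ ∫ ω, a * A.indicator h ω ∂P := by
        refine integral_mono_ae (integrable_condExp.bdd_mul hXm.aestronglyMeasurable hXb)
          ((integrable_condExp.indicator (hm _ hA)).const_mul a) ?_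
        filter_upwards [hX0, hXa] with ω h0 h1
        by_cases hω : ω ∈ A
        · simp only [Set.indicator_of_mem hω]
          exact mul_le_mul_of_nonneg_right h1 hω
        · simp only [Set.indicator_of_notMem hω, mul_zero]
          exact mul_nonpos_of_nonneg_of_nonpos h0 (not_le.mp hω).le
    _ = a * ∫ ω in A, g ω ∂P := by
        rw [integral_const_mul, integral_indicator (hm _ hA), setIntegral_condExp hm hg hA]
    _ ≤ a * κ := mul_le_mul_of_nonneg_left (hκ A hA) ha

/-- Covariance inequality for nonnegative bounded random variables. -/
lemma integral_mul_le_of_measure_inter_le {m₁ m₂ : MeasurableSpace Ω} (hm₁ : m₁ ≤ mΩ)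
    (hm₂ : m₂ ≤ mΩ) {X Y : Ω → ℝ} {a b κ : ℝ} (hX : Measurable[m₁] X) (hY : Measurable[m₂] Y)
    (hX0 : ∀ᵐ ω ∂P, 0 ≤ X ω) (hXa : ∀ᵐ ω ∂P, X ω ≤ a) (ha : 0 ≤ a)
    (hY0 : ∀ᵐ ω ∂P, 0 ≤ Y ω) (hYb : ∀ᵐ ω ∂P, Y ω ≤ b) (hb : 0 ≤ b)
    (hκ : ∀ A B, MeasurableSet[m₁] A → MeasurableSet[m₂] B →
      P.real (A ∩ B) - P.real A * P.real B ≤ κ) :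
    ∫ ω, X ω * Y ω ∂P ≤ (∫ ω, X ω ∂P) * (∫ ω, Y ω ∂P) + a * b * κ := by
  have hXI : Integrable X P := by
    refine Integrable.of_bound (hX.mono hm₁ le_rfl).aestronglyMeasurable a ?_
    filter_upwards [hX0, hXa] with ω h0 h1
    rwa [Real.norm_eq_abs, abs_of_nonneg h0]
  have hYbd : ∀ᵐ ω ∂P, ‖Y ω‖ ≤ b := by
    filter_upwards [hY0, hYb] with ω h0 h1
    rwa [Real.norm_eq_abs, abs_of_nonneg h0]
  have hYI : Integrable Y P :=
    Integrable.of_bound (hY.mono hm₂ le_rfl).aestronglyMeasurable b hYbd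
  have hXYI : Integrable (fun ω => X ω * Y ω) P := by
    simpa only [mul_comm] using hXI.bdd_mul hYI.aestronglyMeasurable hYbd
  have key : ∫ ω, X ω * (Y ω - ∫ ω, Y ω ∂P) ∂P ≤ a * (b * κ) := by
    refine integral_mul_le_of_setIntegral_le hm₁ hX hX0 hXa ha
      (hYI.sub (integrable_const _)) fun A hA => ?_
    have hA' := hm₁ _ hA
    have hI : Integrable (fun ω => A.indicator (fun _ => (1 : ℝ)) ω) P :=
      (integrable_const _).indicator hA'
    have h1 : ∫ ω, Y ω * (A.indicator (fun _ => (1 : ℝ)) ω - P.real A) ∂P ≤ b * κ := by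
      refine integral_mul_le_of_setIntegral_le hm₂ hY hY0 hYb hb
        (hI.sub (integrable_const _)) fun B hB => ?_
      rw [integral_sub hI.integrableOn (integrable_const _).integrableOn,
        setIntegral_indicator hA']
      simp only [setIntegral_const, smul_eq_mul, mul_one]
      rw [Set.inter_comm B A, mul_comm (P.real B)]
      exact hκ A B hA hB
    have h2 : ∫ ω, Y ω * (A.indicator (fun _ => (1 : ℝ)) ω - P.real A) ∂P
        = ∫ ω in A, (Y ω - ∫ ω, Y ω ∂P) ∂P := by
      rw [integral_sub hYI.integrableOn (integrable_const _).integrableOn]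
      simp only [setIntegral_const, smul_eq_mul, mul_sub]
      have h3 : (fun ω => Y ω * A.indicator (fun _ => (1 : ℝ)) ω) = A.indicator Y := by
        ext ω
        by_cases hω : ω ∈ A <;> simp [hω]
      rw [integral_sub (by rw [h3]; exact hYI.indicator hA') (hYI.mul_const _), h3,
        integral_indicator hA', integral_mul_const, mul_comm (P.real A)]
    exact h2 ▸ h1
  simp only [mul_sub] at key
  rw [integral_sub hXYI (hXI.mul_const _), integral_mul_const] at key
  linarith

end Covariance

section Mixing

variable {N : ℕ} {Ω : Type*} {mΩ : MeasurableSpace Ω} {P : Measure Ω}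
  {Z : (Fin N → ℤ) → Ω → ℝ}

lemma fieldSigma_le (hZ : ∀ s, Measurable (Z s)) (I : Set (Fin N → ℤ)) : fieldSigma Z I ≤ mΩ :=
  iSup₂_le fun s _ => (hZ s).comap_le

lemma measurable_fieldSigma {I : Set (Fin N → ℤ)} {s : Fin N → ℤ} (hs : s ∈ I) :
    Measurable[fieldSigma Z I] (Z s) :=
  Measurable.of_comap_le (le_iSup₂ (f := fun s (_ : s ∈ I) =>
    MeasurableSpace.comap (Z s) inferInstance) s hs)

lemma le_alphaMix [IsProbabilityMeasure P] {I J : Set (Fin N → ℤ)} {k : ℕ}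
    (hIJ : ∀ s ∈ I, ∀ t ∈ J, k ≤ latDist s t) {A B : Set Ω}
    (hA : MeasurableSet[fieldSigma Z I] A) (hB : MeasurableSet[fieldSigma Z J] B) :
    P.real (A ∩ B) - P.real A * P.real B ≤ alphaMix P Z k := by
  refine (le_abs_self _).trans (le_csSup ⟨1, ?_⟩ ⟨I, J, hIJ, A, B, hA, hB, rfl⟩)
  rintro x ⟨-, -, -, A, B, -, -, rfl⟩
  change |P.real (A ∩ B) - P.real A * P.real B| ≤ 1
  have h1 : P.real (A ∩ B) ≤ 1 := measureReal_le_one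
  have h2 : P.real A ≤ 1 := measureReal_le_one
  have h3 : P.real B ≤ 1 := measureReal_le_one
  have h4 : 0 ≤ P.real (A ∩ B) := measureReal_nonneg
  have h5 : 0 ≤ P.real A := measureReal_nonneg
  have h6 : 0 ≤ P.real B := measureReal_nonneg
  rw [abs_le]
  constructor <;> nlinarith

/-- Covariance inequality for nonnegative bounded functionals of separated parts of the field. -/
lemma integral_mul_le_alphaMix [IsProbabilityMeasure P] (hZ : ∀ s, Measurable (Z s))
    {I J : Set (Fin N → ℤ)} {k : ℕ} (hIJ : ∀ s ∈ I, ∀ t ∈ J, k ≤ latDist s t)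
    {X Y : Ω → ℝ} {a b : ℝ} (hX : Measurable[fieldSigma Z I] X)
    (hY : Measurable[fieldSigma Z J] Y)
    (hX0 : ∀ᵐ ω ∂P, 0 ≤ X ω) (hXa : ∀ᵐ ω ∂P, X ω ≤ a) (ha : 0 ≤ a)
    (hY0 : ∀ᵐ ω ∂P, 0 ≤ Y ω) (hYb : ∀ᵐ ω ∂P, Y ω ≤ b) (hb : 0 ≤ b) :
    ∫ ω, X ω * Y ω ∂P ≤ (∫ ω, X ω ∂P) * (∫ ω, Y ω ∂P) + a * b * alphaMix P Z k :=
  integral_mul_le_of_measure_inter_le (fieldSigma_le hZ I) (fieldSigma_le hZ J) hX hY hX0 hXa ha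
    hY0 hYb hb fun _ _ hA hB => le_alphaMix hIJ hA hB

variable {B : ℝ}

lemma ae_abs_sum_le (hB : ∀ s, ∀ᵐ ω ∂P, |Z s ω| ≤ B) (D : Finset (Fin N → ℤ)) :
    ∀ᵐ ω ∂P, |∑ s ∈ D, Z s ω| ≤ D.card * B := by
  filter_upwards [ae_all_iff.mpr hB] with ω h
  calc |∑ s ∈ D, Z s ω| ≤ ∑ s ∈ D, |Z s ω| := Finset.abs_sum_le_sum_abs _ _
    _ ≤ ∑ _s ∈ D, B := Finset.sum_le_sum fun s _ => h s
    _ = D.card * B := by simp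

variable [IsProbabilityMeasure P]

lemma integrable_of_ae_abs_le (hZ : ∀ s, Measurable (Z s)) (hB : ∀ s, ∀ᵐ ω ∂P, |Z s ω| ≤ B)
    (s : Fin N → ℤ) : Integrable (Z s) P :=
  Integrable.of_bound (hZ s).aestronglyMeasurable B (hB s)

lemma integrable_mul_of_ae_abs_le (hZ : ∀ s, Measurable (Z s))
    (hB : ∀ s, ∀ᵐ ω ∂P, |Z s ω| ≤ B) (s t : Fin N → ℤ) :
    Integrable (fun ω => Z s ω * Z t ω) P :=
  (integrable_of_ae_abs_le hZ hB t).bdd_mul (hZ s).aestronglyMeasurable (hB s)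

lemma integral_mul_le_of_centered (hZ : ∀ s, Measurable (Z s)) (hB0 : 0 ≤ B)
    (hB : ∀ s, ∀ᵐ ω ∂P, |Z s ω| ≤ B) (hmean : ∀ s, ∫ ω, Z s ω ∂P = 0) (s t : Fin N → ℤ) :
    ∫ ω, Z s ω * Z t ω ∂P ≤ 4 * B ^ 2 * alphaMix P Z (latDist s t) := by
  have hI := integrable_of_ae_abs_le hZ hB
  have hII := integrable_mul_of_ae_abs_le hZ hB
  have h0 : ∀ s, ∀ᵐ ω ∂P, 0 ≤ Z s ω + B := fun s => by
    filter_upwards [hB s] with ω h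
    linarith [(abs_le.mp h).1]
  have h2 : ∀ s, ∀ᵐ ω ∂P, Z s ω + B ≤ 2 * B := fun s => by
    filter_upwards [hB s] with ω h
    linarith [(abs_le.mp h).2]
  have key := integral_mul_le_alphaMix (P := P) hZ (I := {s}) (J := {t}) (k := latDist s t)
    (by simp) ((measurable_fieldSigma (Set.mem_singleton s)).add_const B)
    ((measurable_fieldSigma (Set.mem_singleton t)).add_const B)
    (h0 s) (h2 s) (by positivity) (h0 t) (h2 t) (by positivity)
  have hm : ∀ s, ∫ ω, (Z s ω + B) ∂P = B := fun s => by
    rw [integral_add (hI s) (integrable_const _), hmean s]; simp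
  have hp : ∫ ω, (Z s ω + B) * (Z t ω + B) ∂P = ∫ ω, Z s ω * Z t ω ∂P + B * B := by
    have : ∀ ω, (Z s ω + B) * (Z t ω + B) = Z s ω * Z t ω + (B * Z t ω + B * (Z s ω + B)) :=
      fun ω => by ring
    simp_rw [this]
    have hs : Integrable (fun ω => B * (Z s ω + B)) P :=
      ((hI s).add (integrable_const B)).const_mul B
    have ht : Integrable (fun ω => B * Z t ω) P := (hI t).const_mul B
    have hst : Integrable (fun ω => B * Z t ω + B * (Z s ω + B)) P := ht.add hs
    rw [integral_add (hII s t) hst, integral_add ht hs, integral_const_mul, integral_const_mul,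
      hm s, hmean t]
    ring
  rw [hp, hm, hm] at key
  linarith

/-- The second moment of the sum over `D` is at most of the order of `#D`. -/
lemma integral_sum_sq_le (hZ : ∀ s, Measurable (Z s)) (hB0 : 0 ≤ B)
    (hB : ∀ s, ∀ᵐ ω ∂P, |Z s ω| ≤ B) (hmean : ∀ s, ∫ ω, Z s ω ∂P = 0) {K : ℝ}
    (D : Finset (Fin N → ℤ)) (hK : ∀ s, ∑ t ∈ D, alphaMix P Z (latDist s t) ≤ K) :
    ∫ ω, (∑ s ∈ D, Z s ω) ^ 2 ∂P ≤ D.card * (4 * B ^ 2 * K) := by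
  have hII := integrable_mul_of_ae_abs_le (P := P) hZ hB
  simp_rw [sq (∑ s ∈ D, Z s _), Finset.sum_mul_sum]
  rw [integral_finsetSum _ fun s _ => integrable_finsetSum _ fun t _ => hII s t]
  calc ∑ s ∈ D, ∫ ω, ∑ t ∈ D, Z s ω * Z t ω ∂P
      ≤ ∑ _s ∈ D, 4 * B ^ 2 * K := by
        refine Finset.sum_le_sum fun s _ => ?_
        rw [integral_finsetSum _ fun t _ => hII s t]
        refine (Finset.sum_le_sum fun t _ =>
          integral_mul_le_of_centered hZ hB0 hB hmean s t).trans ?_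
        rw [← Finset.mul_sum]
        exact mul_le_mul_of_nonneg_left (hK s) (by positivity)
    _ = D.card * (4 * B ^ 2 * K) := by simp

/-- Bound on the moment generating function of a block sum. -/
lemma integral_exp_sum_le (hZ : ∀ s, Measurable (Z s)) (hB0 : 0 ≤ B)
    (hB : ∀ s, ∀ᵐ ω ∂P, |Z s ω| ≤ B) (hmean : ∀ s, ∫ ω, Z s ω ∂P = 0) {K l : ℝ}
    (D : Finset (Fin N → ℤ)) (hK : ∀ s, ∑ t ∈ D, alphaMix P Z (latDist s t) ≤ K)
    (hl : |l| * (D.card * B) ≤ 1) :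
    ∫ ω, Real.exp (l * ∑ s ∈ D, Z s ω) ∂P
      ≤ Real.exp (l ^ 2 * (D.card * (4 * B ^ 2 * K))) := by
  have hsum : ∀ᵐ ω ∂P, |l * ∑ s ∈ D, Z s ω| ≤ 1 := by
    filter_upwards [ae_abs_sum_le hB D] with ω h
    rw [abs_mul]
    exact (mul_le_mul_of_nonneg_left h (abs_nonneg l)).trans hl
  have hm : Measurable fun ω => l * ∑ s ∈ D, Z s ω :=
    (Finset.measurable_fun_sum D fun s _ => hZ s).const_mul l
  have hi1 : Integrable (fun ω => l * ∑ s ∈ D, Z s ω) P :=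
    Integrable.of_bound hm.aestronglyMeasurable 1 hsum
  have hi2 : Integrable (fun ω => (l * ∑ s ∈ D, Z s ω) ^ 2) P := by
    refine Integrable.of_bound (hm.pow_const 2).aestronglyMeasurable 1 ?_
    filter_upwards [hsum] with ω h
    rw [Real.norm_eq_abs, abs_pow]
    exact pow_le_one₀ (abs_nonneg _) h
  have hi01 : Integrable (fun ω => 1 + l * ∑ s ∈ D, Z s ω) P := (integrable_const 1).add hi1
  calc ∫ ω, Real.exp (l * ∑ s ∈ D, Z s ω) ∂P
      ≤ ∫ ω, (1 + l * ∑ s ∈ D, Z s ω + (l * ∑ s ∈ D, Z s ω) ^ 2) ∂P := by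
        refine integral_mono_ae ?_ (hi01.add hi2) ?_
        · refine Integrable.of_bound hm.exp.aestronglyMeasurable (Real.exp 1) ?_
          filter_upwards [hsum] with ω h
          rw [Real.norm_eq_abs, Real.abs_exp]
          exact Real.exp_le_exp.mpr (abs_le.mp h).2
        · filter_upwards [hsum] with ω h
          have := (abs_le.mp (Real.abs_exp_sub_one_sub_id_le h)).2
          linarith
    _ = 1 + l ^ 2 * ∫ ω, (∑ s ∈ D, Z s ω) ^ 2 ∂P := by
        rw [integral_add hi01 hi2, integral_add (integrable_const 1) hi1, integral_const_mul,
          integral_finsetSum _ fun s _ => integrable_of_ae_abs_le hZ hB s]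
        simp [hmean, mul_pow, integral_const_mul]
    _ ≤ l ^ 2 * (D.card * (4 * B ^ 2 * K)) + 1 := by
        rw [add_comm]
        gcongr
        exact integral_sum_sq_le hZ hB0 hB hmean D hK
    _ ≤ _ := Real.add_one_le_exp _

/-- Approximate factorization of the expectation of a product of functionals of separated
blocks. -/
lemma integral_prod_le {ι : Type*} (hZ : ∀ s, Measurable (Z s)) (S : ι → Set (Fin N → ℤ))
    (W : ι → Ω → ℝ) (T : Finset ι) {k : ℕ} {a η c : ℝ}
    (hS : ∀ i ∈ T, ∀ j ∈ T, i ≠ j → ∀ s ∈ S i, ∀ t ∈ S j, k ≤ latDist s t)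
    (hW : ∀ i, Measurable[fieldSigma Z (S i)] (W i)) (hW0 : ∀ i, ∀ᵐ ω ∂P, 0 ≤ W i ω)
    (ha : 1 ≤ a) (hWa : ∀ i ∈ T, ∀ᵐ ω ∂P, W i ω ≤ a) (hη : 1 ≤ η)
    (hWη : ∀ i ∈ T, ∫ ω, W i ω ∂P ≤ η) (hc0 : 0 ≤ c) (hc : alphaMix P Z k ≤ c) :
    ∫ ω, ∏ i ∈ T, W i ω ∂P ≤ η ^ T.card * (1 + T.card * a ^ T.card * c) := by
  classical
  induction T using Finset.induction_on with
  | empty => simp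
  | insert i T hi ih =>
    have ih := ih (fun i hi j hj => hS i (Finset.mem_insert_of_mem hi) j
      (Finset.mem_insert_of_mem hj)) (fun i hi => hWa i (Finset.mem_insert_of_mem hi))
      (fun i hi => hWη i (Finset.mem_insert_of_mem hi))
    have ha0 : 0 ≤ a := zero_le_one.trans ha
    have hη0 : 0 ≤ η := zero_le_one.trans hη
    have hprodm : Measurable[fieldSigma Z (⋃ j ∈ T, S j)] fun ω => ∏ j ∈ T, W j ω := by
      refine Finset.measurable_fun_prod T fun j hj => ?_
      refine (hW j).mono (biSup_mono fun s hs => ?_) le_rfl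
      exact Set.mem_biUnion hj hs
    have hprod0 : ∀ᵐ ω ∂P, 0 ≤ ∏ j ∈ T, W j ω := by
      filter_upwards [(Finset.eventually_all T).mpr fun j _ => hW0 j] with ω h
      exact Finset.prod_nonneg h
    have hproda : ∀ᵐ ω ∂P, ∏ j ∈ T, W j ω ≤ a ^ T.card := by
      filter_upwards [(Finset.eventually_all T).mpr fun j _ => hW0 j,
        (Finset.eventually_all T).mpr fun j hj => hWa j (Finset.mem_insert_of_mem hj)] with ω h h'
      exact (Finset.prod_le_prod h h').trans_eq (Finset.prod_const a)
    have key := integral_mul_le_alphaMix (P := P) hZ (I := S i) (J := ⋃ j ∈ T, S j) (k := k)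
      (by
        intro s hs t ht
        obtain ⟨j, hj, ht⟩ := Set.mem_iUnion₂.mp ht
        exact hS i (Finset.mem_insert_self i T) j (Finset.mem_insert_of_mem hj)
          (fun h => hi (h ▸ hj)) s hs t ht)
      (hW i) hprodm (hW0 i) (hWa i (Finset.mem_insert_self i T)) ha0 hprod0 hproda
      (by positivity)
    simp_rw [Finset.prod_insert hi]
    rw [Finset.card_insert_of_notMem hi]
    refine key.trans ?_
    have h1 : (∫ ω, W i ω ∂P) * ∫ ω, ∏ j ∈ T, W j ω ∂P
        ≤ η * (η ^ T.card * (1 + T.card * a ^ T.card * c)) :=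
      mul_le_mul (hWη i (Finset.mem_insert_self i T)) ih (integral_nonneg_of_ae hprod0) hη0
    have h2 : a * a ^ T.card * alphaMix P Z k ≤ η ^ (T.card + 1) * (a ^ (T.card + 1) * c) := by
      rw [← pow_succ']
      calc a ^ (T.card + 1) * alphaMix P Z k ≤ 1 * (a ^ (T.card + 1) * c) := by
            rw [one_mul]; gcongr
        _ ≤ _ := by
            gcongr
            exact one_le_pow₀ hη
    have h3 : (T.card : ℝ) * a ^ T.card * c ≤ T.card * a ^ (T.card + 1) * c := by
      gcongr
      omega
    push_cast
    calc _ ≤ η * (η ^ T.card * (1 + T.card * a ^ T.card * c))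
          + η ^ (T.card + 1) * (a ^ (T.card + 1) * c) := add_le_add h1 h2
      _ = η ^ (T.card + 1) * (1 + T.card * a ^ T.card * c + a ^ (T.card + 1) * c) := by ring
      _ ≤ η ^ (T.card + 1) * (1 + T.card * a ^ (T.card + 1) * c + a ^ (T.card + 1) * c) := by
          gcongr
      _ = _ := by ring

end Mixing

section Lattice

lemma summable_exp_neg_mul_natAbs {c : ℝ} (hc : 0 < c) :
    Summable fun j : ℤ => Real.exp (-c * j.natAbs) := by
  have h : Summable fun j : ℕ => Real.exp (-c * j) := by
    have := summable_geometric_of_lt_one (Real.exp_nonneg (-c))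
      (Real.exp_lt_one_iff.mpr (neg_lt_zero.mpr hc))
    refine this.congr fun j => ?_
    rw [← Real.exp_nat_mul, mul_comm]
  exact Summable.of_nat_of_neg (by simpa using h) (by simpa using h)

/-- Exponentially decaying sums over the lattice are uniformly bounded. -/
lemma exists_sum_exp_latDist_le {N : ℕ} (hN : 0 < N) {c : ℝ} (hc : 0 < c) :
    ∃ K : ℝ, 0 < K ∧ ∀ (s : Fin N → ℤ) (T : Finset (Fin N → ℤ)),
      ∑ t ∈ T, Real.exp (-c * latDist s t) ≤ K := by
  have hN' : (0 : ℝ) < N := by exact_mod_cast hN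
  have hsum := summable_exp_neg_mul_natAbs (div_pos hc hN')
  set L : ℝ := ∑' j : ℤ, Real.exp (-(c / N) * j.natAbs) with hL
  have hL0 : 0 < L := hsum.tsum_pos (fun _ => (Real.exp_pos _).le) 0 (Real.exp_pos _)
  refine ⟨L ^ N, by positivity, fun s T => ?_⟩
  have hone : ∀ (x : ℤ) (U : Finset ℤ),
      ∑ j ∈ U, Real.exp (-(c / N) * (x - j).natAbs) ≤ L := fun x U => by
    have h := (Equiv.subLeft x).summable_iff.mpr hsum
    have h' := (Equiv.subLeft x).tsum_eq fun j : ℤ => Real.exp (-(c / N) * j.natAbs)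
    rw [hL, ← h']
    exact h.sum_le_tsum U fun _ _ => (Real.exp_pos _).le
  calc ∑ t ∈ T, Real.exp (-c * latDist s t)
      ≤ ∑ t ∈ T, ∏ i, Real.exp (-(c / N) * (s i - t i).natAbs) := by
        refine Finset.sum_le_sum fun t _ => ?_
        rw [← Real.exp_sum, ← Finset.mul_sum]
        have h : ∑ i, ((s i - t i).natAbs : ℝ) ≤ N * latDist s t := by
          calc ∑ i, ((s i - t i).natAbs : ℝ) ≤ ∑ _i : Fin N, (latDist s t : ℝ) := by
                refine Finset.sum_le_sum fun i _ => ?_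
                exact_mod_cast Finset.le_sup (f := fun i => (s i - t i).natAbs)
                  (Finset.mem_univ i)
            _ = N * latDist s t := by simp
        refine Real.exp_le_exp.mpr ?_
        have h2 := mul_le_mul_of_nonneg_left h (div_pos hc hN').le
        rw [← mul_assoc, div_mul_cancel₀ _ hN'.ne'] at h2
        linarith
    _ ≤ ∑ t ∈ Fintype.piFinset fun i => T.image fun t => t i,
          ∏ i, Real.exp (-(c / N) * (s i - t i).natAbs) := by
        refine Finset.sum_le_sum_of_subset_of_nonneg (fun t ht => ?_)
          fun _ _ _ => Finset.prod_nonneg fun _ _ => (Real.exp_pos _).le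
        exact Fintype.mem_piFinset.mpr fun i => Finset.mem_image_of_mem (fun t => t i) ht
    _ = ∏ i, ∑ j ∈ T.image fun t => t i, Real.exp (-(c / N) * (s i - j).natAbs) :=
        (Finset.prod_univ_sum (fun i => T.image fun t => t i)
          fun i j => Real.exp (-(c / N) * (s i - j).natAbs)).symm
    _ ≤ ∏ _i : Fin N, L :=
        Finset.prod_le_prod (fun _ _ => Finset.sum_nonneg fun _ _ => (Real.exp_pos _).le)
          fun i _ => hone (s i) _
    _ = L ^ N := by simp

/-- The index of the cube of side `p` containing the point `s`. -/
def blockIdx {N : ℕ} (p : ℕ) (s : Fin N → ℤ) : Fin N → ℤ := fun i => s i / p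

/-- The parity class of a cube index. -/
def blockColor {N : ℕ} (b : Fin N → ℤ) : Fin N → Bool := fun i => decide (b i % 2 = 0)

lemma le_latDist_of_blockColor_eq {N p : ℕ} (hp : 0 < p) {s t : Fin N → ℤ}
    (hne : blockIdx p s ≠ blockIdx p t)
    (hcol : blockColor (blockIdx p s) = blockColor (blockIdx p t)) : p ≤ latDist s t := by
  obtain ⟨i, hi⟩ := Function.ne_iff.mp hne
  have hc := decide_eq_decide.mp (congrFun hcol i)
  simp only [blockIdx] at hi hc
  refine le_trans ?_ (Finset.le_sup (f := fun i => (s i - t i).natAbs) (Finset.mem_univ i))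
  have hp' : (0 : ℤ) < p := by exact_mod_cast hp
  have h1 := Int.emod_add_mul_ediv (s i) p
  have h2 := Int.emod_add_mul_ediv (t i) p
  have h3 := Int.emod_nonneg (s i) hp'.ne'
  have h4 := Int.emod_nonneg (t i) hp'.ne'
  have h5 := Int.emod_lt_of_pos (s i) hp'
  have h6 := Int.emod_lt_of_pos (t i) hp'
  generalize s i / (p : ℤ) = x at *
  generalize t i / (p : ℤ) = y at *
  have h7 : x + 2 ≤ y ∨ y + 2 ≤ x := by omega
  rcases h7 with h7 | h7
  · have := mul_le_mul_of_nonneg_left h7 hp'.le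
    rw [mul_add] at this
    omega
  · have := mul_le_mul_of_nonneg_left h7 hp'.le
    rw [mul_add] at this
    omega

lemma card_filter_blockIdx_le {N p : ℕ} (hp : 0 < p) (D : Finset (Fin N → ℤ))
    (b : Fin N → ℤ) : (D.filter fun s => blockIdx p s = b).card ≤ p ^ N := by
  have hp' : (0 : ℤ) < p := by exact_mod_cast hp
  calc (D.filter fun s => blockIdx p s = b).card
      ≤ (Fintype.piFinset fun i => Finset.Ico (p * b i) (p * b i + p)).card := by
        refine Finset.card_le_card fun s hs => Fintype.mem_piFinset.mpr fun i => ?_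
        have h := congrFun (Finset.mem_filter.mp hs).2 i
        simp only [blockIdx] at h
        have h1 := Int.emod_add_mul_ediv (s i) p
        have h3 := Int.emod_nonneg (s i) hp'.ne'
        have h5 := Int.emod_lt_of_pos (s i) hp'
        rw [h] at h1
        rw [Finset.mem_Ico]
        omega
    _ = p ^ N := by simp

lemma card_image_blockIdx_le {N p : ℕ} (hp : 0 < p) (n : Fin N → ℕ) :
    ((obsIdx n).image (blockIdx p)).card ≤ ∏ i, (n i / p + 1) := by
  calc ((obsIdx n).image (blockIdx p)).card
      ≤ (Fintype.piFinset fun i => Finset.Icc (0 : ℤ) (n i / p : ℕ)).card := by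
        refine Finset.card_le_card fun b hb => Fintype.mem_piFinset.mpr fun i => ?_
        obtain ⟨s, hs, rfl⟩ := Finset.mem_image.mp hb
        have hs := Finset.mem_Icc.mp hs
        have h1 := hs.1 i
        have h2 := hs.2 i
        simp only at h1 h2
        rw [Finset.mem_Icc, blockIdx]
        refine ⟨Int.ediv_nonneg (by omega) (by positivity), ?_⟩
        push_cast
        exact Int.ediv_le_ediv (by exact_mod_cast hp) h2
    _ = ∏ i, (n i / p + 1) := by
        rw [Fintype.card_piFinset]
        refine Finset.prod_congr rfl fun i _ => ?_
        rw [Int.card_Icc]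
        have : 0 ≤ n i / p := Nat.zero_le _
        omega

end Lattice

section Tail

variable {N : ℕ} {Ω : Type*} {mΩ : MeasurableSpace Ω} {P : Measure Ω} [IsProbabilityMeasure P]
  {Z : (Fin N → ℤ) → Ω → ℝ} {B K K₁ c0 c1 δ : ℝ} {p : ℕ}

lemma integrable_exp_mul_sum (hZ : ∀ s, Measurable (Z s)) (hB : ∀ s, ∀ᵐ ω ∂P, |Z s ω| ≤ B)
    (D : Finset (Fin N → ℤ)) (l : ℝ) :
    Integrable (fun ω => Real.exp (l * ∑ s ∈ D, Z s ω)) P := by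
  have hm : Measurable fun ω => l * ∑ s ∈ D, Z s ω :=
    (Finset.measurable_fun_sum D fun s _ => hZ s).const_mul l
  refine Integrable.of_bound hm.exp.aestronglyMeasurable (Real.exp (|l| * (D.card * B))) ?_
  filter_upwards [ae_abs_sum_le hB D] with ω h
  rw [Real.norm_eq_abs, Real.abs_exp]
  refine Real.exp_le_exp.mpr ((le_abs_self _).trans ?_)
  rw [abs_mul]
  exact mul_le_mul_of_nonneg_left h (abs_nonneg l)

/-- Uniform bound on the moment generating function of a sum over cubes of one parity class. -/
lemma integral_exp_sum_le_of_blockColor (hN : 0 < N) (hZ : ∀ s, Measurable (Z s)) (hB0 : 0 < B)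
    (hB : ∀ s, ∀ᵐ ω ∂P, |Z s ω| ≤ B) (hmean : ∀ s, ∫ ω, Z s ω ∂P = 0)
    (hK : ∀ s (D : Finset (Fin N → ℤ)), ∑ t ∈ D, alphaMix P Z (latDist s t) ≤ K) (hK0 : 0 ≤ K)
    (hp : 0 < p) (hc0 : 0 < c0) (hc1 : 0 < c1)
    (hmix : alphaMix P Z p ≤ c0 * Real.exp (-c1 * p)) (D : Finset (Fin N → ℤ))
    (hcol : ∀ s ∈ D, ∀ t ∈ D, blockColor (blockIdx p s) = blockColor (blockIdx p t))
    (hcard : ((D.image (blockIdx p)).card : ℝ) ≤ K₁ * p) (hK₁ : 0 < K₁) (hδ0 : 0 ≤ δ)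
    (hδ1 : δ ≤ 1) (hδ : δ * K₁ ≤ c1 / 2) {l : ℝ} (hl : |l| * (p ^ N * B) ≤ δ) :
    ∫ ω, Real.exp (l * ∑ s ∈ D, Z s ω) ∂P
      ≤ Real.exp (4 * K * K₁) * (1 + 2 * K₁ * c0 / c1) := by
  set T := D.image (blockIdx p) with hT
  set S : (Fin N → ℤ) → Finset (Fin N → ℤ) := fun b => D.filter fun s => blockIdx p s = b with hS
  have hp0 : (0 : ℝ) < p := by exact_mod_cast hp
  have hp1 : (1 : ℝ) ≤ p := by exact_mod_cast hp
  have hScard : ∀ b, ((S b).card : ℝ) ≤ (p : ℝ) ^ N := fun b => by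
    exact_mod_cast card_filter_blockIdx_le hp D b
  have hlS : ∀ b, |l| * ((S b).card * B) ≤ δ := fun b =>
    le_trans (by gcongr; exact hScard b) hl
  have hprod : ∀ ω, Real.exp (l * ∑ s ∈ D, Z s ω)
      = ∏ b ∈ T, Real.exp (l * ∑ s ∈ S b, Z s ω) := fun ω => by
    rw [← Real.exp_sum, ← Finset.mul_sum, hS, hT,
      Finset.sum_fiberwise_of_maps_to fun s hs => Finset.mem_image_of_mem (blockIdx p) hs]
  have hsq : l ^ 2 * ((p : ℝ) ^ N * B ^ 2) ≤ 1 / (p : ℝ) ^ N := by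
    rw [le_div_iff₀ (by positivity)]
    calc l ^ 2 * ((p : ℝ) ^ N * B ^ 2) * (p : ℝ) ^ N = (|l| * (p ^ N * B)) ^ 2 := by
          rw [mul_pow, sq_abs]; ring
      _ ≤ 1 := pow_le_one₀ (by positivity) (hl.trans hδ1)
  have hmgf : ∀ b, ∫ ω, Real.exp (l * ∑ s ∈ S b, Z s ω) ∂P
      ≤ Real.exp (4 * K / (p : ℝ) ^ N) := fun b => by
    refine (integral_exp_sum_le hZ hB0.le hB hmean (S b) (fun s => hK s _)
      ((hlS b).trans hδ1)).trans (Real.exp_le_exp.mpr ?_)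
    calc l ^ 2 * ((S b).card * (4 * B ^ 2 * K)) ≤ l ^ 2 * ((p : ℝ) ^ N * (4 * B ^ 2 * K)) := by
          gcongr
          exact hScard b
      _ = (l ^ 2 * ((p : ℝ) ^ N * B ^ 2)) * (4 * K) := by ring
      _ ≤ 1 / (p : ℝ) ^ N * (4 * K) := by gcongr
      _ = 4 * K / (p : ℝ) ^ N := by ring
  have key := integral_prod_le (P := P) hZ (fun b => (S b : Set (Fin N → ℤ)))
    (fun b ω => Real.exp (l * ∑ s ∈ S b, Z s ω)) T (k := p) (a := Real.exp δ)
    (η := Real.exp (4 * K / (p : ℝ) ^ N)) (c := c0 * Real.exp (-c1 * p))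
    (by
      intro b _ b' _ hbb s hs t ht
      simp only [hS, Finset.coe_filter, Set.mem_ofPred_eq] at hs ht
      exact le_latDist_of_blockColor_eq hp (by rwa [hs.2, ht.2]) (hcol s hs.1 t ht.1))
    (fun b => ((Finset.measurable_fun_sum (S b) fun s hs =>
      measurable_fieldSigma (Finset.mem_coe.mpr hs)).const_mul l).exp)
    (fun b => Eventually.of_forall fun ω => (Real.exp_pos _).le)
    (Real.one_le_exp hδ0)
    (fun b _ => by
      filter_upwards [ae_abs_sum_le hB (S b)] with ω h
      refine Real.exp_le_exp.mpr ((le_abs_self _).trans ?_)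
      rw [abs_mul]
      exact (mul_le_mul_of_nonneg_left h (abs_nonneg l)).trans (hlS b))
    (Real.one_le_exp (by positivity)) (fun b _ => hmgf b) (by positivity) hmix
  simp_rw [hprod]
  refine key.trans ?_
  rw [← Real.exp_nat_mul, ← Real.exp_nat_mul]
  gcongr ?_ * (1 + ?_)
  · refine Real.exp_le_exp.mpr ?_
    calc (T.card : ℝ) * (4 * K / (p : ℝ) ^ N) ≤ (K₁ * p) * (4 * K / p) := by
          gcongr
          exact le_self_pow₀ hp1 hN.ne'
      _ = 4 * K * K₁ := by field_simp
  · have h1 : c1 / 2 * p * Real.exp (-(c1 / 2 * p)) ≤ 1 := by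
      rw [Real.exp_neg, ← div_eq_mul_inv, div_le_one (Real.exp_pos _)]
      linarith [Real.add_one_le_exp (c1 / 2 * p)]
    calc T.card * Real.exp (T.card * δ) * (c0 * Real.exp (-c1 * p))
        ≤ (K₁ * p) * Real.exp (c1 / 2 * p) * (c0 * Real.exp (-c1 * p)) := by
          refine mul_le_mul_of_nonneg_right (mul_le_mul hcard (Real.exp_le_exp.mpr ?_)
            (Real.exp_pos _).le (by positivity)) (by positivity)
          calc T.card * δ ≤ (K₁ * p) * δ := by gcongr
            _ = (δ * K₁) * p := by ring
            _ ≤ c1 / 2 * p := by gcongr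
      _ = K₁ * c0 * p * (Real.exp (c1 / 2 * p) * Real.exp (-c1 * p)) := by ring
      _ = (2 * K₁ * c0 / c1) * (c1 / 2 * p * Real.exp (-(c1 / 2 * p))) := by
          rw [← Real.exp_add, show c1 / 2 * p + -c1 * p = -(c1 / 2 * p) by ring]
          field_simp
      _ ≤ 2 * K₁ * c0 / c1 := mul_le_of_le_one_right (by positivity) h1

lemma measureReal_lt_abs_sum_le (hZ : ∀ s, Measurable (Z s))
    (hB : ∀ s, ∀ᵐ ω ∂P, |Z s ω| ≤ B) (D : Finset (Fin N → ℤ)) {A l : ℝ} (hl : 0 ≤ l)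
    (hA : ∀ l', |l'| = l → ∫ ω, Real.exp (l' * ∑ s ∈ D, Z s ω) ∂P ≤ A) (x : ℝ) :
    P.real {ω | x < |∑ s ∈ D, Z s ω|} ≤ 2 * A * Real.exp (-(l * x)) := by
  have h1 := ProbabilityTheory.measure_ge_le_exp_mul_mgf (μ := P)
    (X := fun ω => ∑ s ∈ D, Z s ω) x hl (integrable_exp_mul_sum hZ hB D l)
  have h2 := ProbabilityTheory.measure_le_le_exp_mul_mgf (μ := P)
    (X := fun ω => ∑ s ∈ D, Z s ω) (-x) (neg_nonpos.mpr hl) (integrable_exp_mul_sum hZ hB D (-l))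
  have h3 := mul_le_mul_of_nonneg_left (hA l (abs_of_nonneg hl)) (Real.exp_pos (-(l * x))).le
  have h4 := mul_le_mul_of_nonneg_left (hA (-l) (by rw [abs_neg, abs_of_nonneg hl]))
    (Real.exp_pos (-(l * x))).le
  rw [ProbabilityTheory.mgf, neg_mul] at h1
  rw [ProbabilityTheory.mgf, show - -l * -x = -(l * x) by ring] at h2
  have hsub : {ω | x < |∑ s ∈ D, Z s ω|}
      ⊆ {ω | x ≤ ∑ s ∈ D, Z s ω} ∪ {ω | ∑ s ∈ D, Z s ω ≤ -x} := fun ω hω => by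
    rcases lt_abs.mp (show x < |∑ s ∈ D, Z s ω| from hω) with h | h
    · exact Or.inl h.le
    · exact Or.inr (by simp only [Set.mem_ofPred_eq]; linarith)
  have h5 := (measureReal_mono (μ := P) hsub).trans (measureReal_union_le _ _)
  linarith

/-- Union bound over the parity classes. -/
lemma measureReal_lt_abs_sum_le_of_blockColor (D : Finset (Fin N → ℤ)) {ε b : ℝ}
    (h : ∀ c, P.real {ω | ε / 2 ^ N <
      |∑ s ∈ D.filter fun s => blockColor (blockIdx p s) = c, Z s ω|} ≤ b) :
    P.real {ω | ε < |∑ s ∈ D, Z s ω|} ≤ 2 ^ N * b := by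
  have hsub : {ω | ε < |∑ s ∈ D, Z s ω|} ⊆ ⋃ c : Fin N → Bool, {ω | ε / 2 ^ N <
      |∑ s ∈ D.filter fun s => blockColor (blockIdx p s) = c, Z s ω|} := fun ω hω => by
    by_contra! hc
    simp only [Set.mem_iUnion, Set.mem_ofPred_eq, not_exists, not_lt] at hc hω
    rw [← Finset.sum_fiberwise D fun s => blockColor (blockIdx p s)] at hω
    have h1 := hω.trans_le ((Finset.abs_sum_le_sum_abs _ _).trans
      (Finset.sum_le_sum fun c _ => hc c))
    simp [mul_div_cancel₀] at h1
  calc P.real {ω | ε < |∑ s ∈ D, Z s ω|}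
      ≤ ∑ c : Fin N → Bool, P.real {ω | ε / 2 ^ N <
          |∑ s ∈ D.filter fun s => blockColor (blockIdx p s) = c, Z s ω|} :=
        (measureReal_mono hsub).trans (measureReal_iUnion_fintype_le _)
    _ ≤ ∑ _c : Fin N → Bool, b := Finset.sum_le_sum fun c _ => h c
    _ = 2 ^ N * b := by simp

end Tail

/-- A cube side for which both the volume of a cube and the number of cubes meeting the window are
controlled. -/
lemma exists_blockSide {N : ℕ} (hN : 0 < N) {C : ℝ} (hC : 0 < C) {n : Fin N → ℕ}
    (hn : ∀ i, 1 ≤ n i) (hnC : ∀ i j, C * (n j : ℝ) ≤ n i) :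
    ∃ p : ℕ, 0 < p ∧ (p : ℝ) ^ N ≤ 2 ^ N * (∏ i, (n i : ℝ)) ^ ((N : ℝ) / (N + 1)) ∧
      ((∏ i, (n i / p + 1) : ℕ) : ℝ) ≤ (1 / C + 1) ^ N * p := by
  set M : ℝ := ∏ i, (n i : ℝ) with hM
  have hM1 : 1 ≤ M := Finset.prod_induction _ (1 ≤ ·)
    (fun _ _ => one_le_mul_of_one_le_of_one_le) le_rfl fun i _ => by exact_mod_cast hn i
  have hM0 : 0 ≤ M := zero_le_one.trans hM1
  set x : ℝ := M ^ (1 / ((N : ℝ) + 1)) with hx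
  have hx1 : 1 ≤ x := Real.one_le_rpow hM1 (by positivity)
  have hxM : x ^ (N + 1) = M := by
    rw [hx, ← Real.rpow_natCast, ← Real.rpow_mul hM0]
    push_cast
    rw [one_div_mul_cancel (by positivity), Real.rpow_one]
  have hxN : x ^ N = M ^ ((N : ℝ) / (N + 1)) := by
    rw [hx, ← Real.rpow_natCast, ← Real.rpow_mul hM0, one_div_mul_eq_div]
  set p := ⌈x⌉₊ with hp
  have hxp : x ≤ p := Nat.le_ceil x
  have hpx : (p : ℝ) ≤ 2 * x := by linarith [Nat.ceil_lt_add_one (zero_le_one.trans hx1)]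
  have hp1 : (1 : ℝ) ≤ p := hx1.trans hxp
  have hp0 : (0 : ℝ) < p := zero_lt_one.trans_le hp1
  refine ⟨p, by exact_mod_cast hp0, ?_, ?_⟩
  · rw [← hxN, ← mul_pow]
    gcongr
  · set q : ℝ := (p : ℝ) ^ (1 / (N : ℝ)) with hq
    have hq1 : 1 ≤ q := Real.one_le_rpow hp1 (by positivity)
    have hqN : q ^ N = p := by
      rw [hq, one_div, Real.rpow_inv_natCast_pow hp0.le hN.ne']
    have hnq : ∀ i, C * n i ≤ p * q := fun i => by
      refine le_of_pow_le_pow_left₀ hN.ne' (by positivity) ?_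
      calc (C * (n i : ℝ)) ^ N = ∏ _j : Fin N, C * (n i : ℝ) := by simp
        _ ≤ M := Finset.prod_le_prod (fun _ _ => by positivity) fun j _ => hnC j i
        _ = x ^ (N + 1) := hxM.symm
        _ ≤ (p : ℝ) ^ (N + 1) := by gcongr
        _ = (p * q) ^ N := by rw [mul_pow, hqN, pow_succ]
    push_cast
    calc ∏ i, (((n i / p : ℕ) : ℝ) + 1) ≤ ∏ _i : Fin N, (1 / C + 1) * q := by
          refine Finset.prod_le_prod (fun _ _ => by positivity) fun i _ => ?_
          have h1 : ((n i / p : ℕ) : ℝ) ≤ n i / p := Nat.cast_div_le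
          have h2 : (n i : ℝ) / p ≤ 1 / C * q := by
            rw [div_le_iff₀ hp0, one_div_mul_eq_div, div_mul_eq_mul_div, le_div_iff₀ hC]
            linarith [hnq i]
          linarith
      _ = (1 / C + 1) ^ N * p := by
          rw [Finset.prod_const, Finset.card_univ, Fintype.card_fin, mul_pow, hqN]

/-- Exponential-decay large deviation inequality for bounded, centered, exponentially
α-mixing random fields on `ℤ^N`. -/
theorem large_deviation_mixing_field (N : ℕ) (hN : 0 < N) (C' c0 c1 : ℝ)
    (hC' : 0 < C') (hc0 : 0 < c0) (hc1 : 0 < c1) :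
    ∃ A1 A2 : ℝ, 0 < A1 ∧ 0 < A2 ∧
      ∀ (Ω : Type) (_ : MeasurableSpace Ω) (P : Measure Ω),
      IsProbabilityMeasure P →
      ∀ (Z : (Fin N → ℤ) → Ω → ℝ), (∀ s, Measurable (Z s)) →
      -- identical marginal distributions
      (∀ s t, Measure.map (Z s) P = Measure.map (Z t) P) →
      -- exponentially decreasing α-mixing coefficients
      (∀ k : ℕ, alphaMix P Z k ≤ c0 * Real.exp (-c1 * k)) →
      ∀ B : ℝ, 0 < B →
      (∀ s, ∫ ω, Z s ω ∂P = 0) →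
      (∀ s, ∀ᵐ ω ∂P, |Z s ω| ≤ B) →
      ∀ n : Fin N → ℕ,
      (∀ i, Real.exp 2 ≤ (n i : ℝ)) →
      (∀ i j, C' * (n j : ℝ) ≤ (n i : ℝ)) →
      ∀ ε : ℝ, 0 < ε →
      P {ω | ε < |∑ s ∈ obsIdx n, Z s ω|} ≤ ENNReal.ofReal
        (A1 * Real.exp (-A2 * ε * B⁻¹ * (∏ i, (n i : ℝ)) ^ (-(N : ℝ) / (N + 1)) *
          (∏ i, Real.log (n i))⁻¹)) := by
  obtain ⟨K₀, hK₀, hKsum⟩ := exists_sum_exp_latDist_le hN hc1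
  set K₁ : ℝ := (1 / C' + 1) ^ N with hK₁
  have hK₁0 : 0 < K₁ := by positivity
  set δ : ℝ := min 1 (c1 / (2 * K₁)) with hδ
  have hδ0 : 0 < δ := lt_min one_pos (by positivity)
  have hδK : δ * K₁ ≤ c1 / 2 := by
    calc δ * K₁ ≤ c1 / (2 * K₁) * K₁ := by gcongr; exact min_le_right _ _
      _ = c1 / 2 := by field_simp
  set A : ℝ := Real.exp (4 * (c0 * K₀) * K₁) * (1 + 2 * K₁ * c0 / c1) with hA
  have hA0 : 0 < A := by positivity
  refine ⟨2 ^ N * (2 * A), δ / 4 ^ N, by positivity, by positivity, ?_⟩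
  intro Ω _ P _ Z hZ _ hmix B hB0 hmean hB n hn hnC ε hε
  have hlog : ∀ i, 1 ≤ Real.log (n i) := fun i => by
    have := Real.log_le_log (Real.exp_pos 2) (hn i)
    rw [Real.log_exp] at this
    linarith
  have hn1 : ∀ i, 1 ≤ n i := fun i => by
    exact_mod_cast (Real.one_le_exp zero_le_two).trans (hn i)
  obtain ⟨p, hp, hpN, hpcard⟩ := exists_blockSide hN hC' hn1 hnC
  have hp0 : (0 : ℝ) < p := by exact_mod_cast hp
  have hK : ∀ s (D : Finset (Fin N → ℤ)), ∑ t ∈ D, alphaMix P Z (latDist s t) ≤ c0 * K₀ :=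
    fun s D => by
      refine (Finset.sum_le_sum fun t _ => hmix (latDist s t)).trans ?_
      rw [← Finset.mul_sum]
      exact mul_le_mul_of_nonneg_left (hKsum s D) hc0.le
  set l : ℝ := δ / (p ^ N * B) with hl
  have hmain : P.real {ω | ε < |∑ s ∈ obsIdx n, Z s ω|}
      ≤ 2 ^ N * (2 * A * Real.exp (-(l * (ε / 2 ^ N)))) := by
    refine measureReal_lt_abs_sum_le_of_blockColor (p := p) (obsIdx n) fun c => ?_
    refine measureReal_lt_abs_sum_le hZ hB _ (by positivity) (fun l' hl' => ?_) _
    refine integral_exp_sum_le_of_blockColor (δ := δ) hN hZ hB0 hB hmean hK (by positivity) hp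
      hc0 hc1 (hmix p) _ (fun s hs t ht => ?_) ?_ hK₁0 hδ0.le (min_le_left _ _) hδK ?_
    · rw [(Finset.mem_filter.mp hs).2, (Finset.mem_filter.mp ht).2]
    · refine le_trans ?_ hpcard
      exact_mod_cast (Finset.card_le_card (Finset.image_subset_image
        (Finset.filter_subset _ _))).trans (card_image_blockIdx_le hp n)
    · rw [hl', hl, div_mul_cancel₀ _ (by positivity)]
  rw [← ofReal_measureReal]
  refine ENNReal.ofReal_le_ofReal (hmain.trans ?_)
  rw [← mul_assoc]
  refine mul_le_mul_of_nonneg_left (Real.exp_le_exp.mpr ?_) (by positivity)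
  have hM0 : 0 < ∏ i, (n i : ℝ) :=
    Finset.prod_pos fun i _ => by exact_mod_cast hn1 i
  set Q : ℝ := (∏ i, (n i : ℝ)) ^ ((N : ℝ) / (N + 1)) with hQ
  have hQ0 : 0 < Q := Real.rpow_pos_of_pos hM0 _
  have hL : (∏ i, Real.log (n i))⁻¹ ≤ 1 := inv_le_one_of_one_le₀ <|
    Finset.prod_induction _ (1 ≤ ·) (fun _ _ => one_le_mul_of_one_le_of_one_le) le_rfl
      fun i _ => hlog i
  rw [neg_div, Real.rpow_neg hM0.le, ← hQ]
  have h4 : (4 : ℝ) ^ N = 2 ^ N * 2 ^ N := by rw [← mul_pow]; norm_num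
  have h1 : δ / 4 ^ N * ε * B⁻¹ * Q⁻¹ * (∏ i, Real.log (n i))⁻¹ ≤ l * (ε / 2 ^ N) := by
    calc δ / 4 ^ N * ε * B⁻¹ * Q⁻¹ * (∏ i, Real.log (n i))⁻¹
        ≤ δ / 4 ^ N * ε * B⁻¹ * Q⁻¹ * 1 := by gcongr
      _ = δ / (2 ^ N * Q * B) * (ε / 2 ^ N) := by
          rw [h4]
          field_simp
      _ ≤ l * (ε / 2 ^ N) := by
          rw [hl]
          gcongr
  linarith
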